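/- Let R⁰ ∈ S²_B(⋀²ℝⁿ) be an Einstein algebraic curvature operator with s(R⁰) > 0 which is not a scalar multiple of id ∧ id (so R⁰ = R⁰_I + R⁰_W with R⁰_W ≠ 0), and suppose Q(R⁰) = λR⁰ with λ > 0 (necessarily λ = s(R⁰)/n). Then for every α₀ ∈ (0,1), the curve R(t) = (α₀/(1 − λα₀t)) R⁰_I + (1/(1 − λt)) R⁰_W, defined for t ∈ [0, 1/λ), satisfies dR/dt = Q(R(t)) with initial value R(0) = α₀R⁰_I + R⁰_W, and the normalized curve R(t)/‖R(t)_W‖ converges to R⁰_W/‖R⁰_W‖ as t → 1/λ. In particular the ODE dR/dt = Q(R) has, up to normalization, a solution curve emerging from a point arbitrarily close to R⁰ and approaching the normalized Weyl curvature of R⁰. -/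

import Mathlib

open scoped BigOperators
open Matrix Filter

noncomputable section

/-- `so n`: the Lie algebra of real skew-symmetric `n × n` matrices, as a submodule of
matrices.  It is the model for `⋀²ℝⁿ` under the identification `x ∧ y ↦ x yᵀ - y xᵀ`,
i.e. `(x ∧ y)(z) = ⟨y,z⟩x - ⟨x,z⟩y`. -/
def so (n : ℕ) : Submodule ℝ (Matrix (Fin n) (Fin n) ℝ) where
  carrier := {A | Aᵀ = -A}
  add_mem' := fun {a b} ha hb => by
    simp only [Set.mem_setOf_eq] at *
    rw [Matrix.transpose_add, ha, hb, neg_add]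
  zero_mem' := by simp
  smul_mem' := fun c {a} ha => by
    simp only [Set.mem_setOf_eq] at *
    rw [Matrix.transpose_smul, ha, smul_neg]

lemma mem_so {n : ℕ} {A : Matrix (Fin n) (Fin n) ℝ} : A ∈ so n ↔ Aᵀ = -A := Iff.rfl

lemma so_skew {n : ℕ} (X : so n) : (X.1)ᵀ = -X.1 := mem_so.mp X.2

lemma so_skew' {n : ℕ} (X : so n) (i j : Fin n) : X.1 j i = -X.1 i j := by
  have h := congrFun (congrFun (so_skew X) i) j
  simpa [Matrix.transpose_apply] using h

/-- The Lie bracket (matrix commutator) on `so n`. -/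
def brkt {n : ℕ} (X Y : so n) : so n :=
  ⟨X.1 * Y.1 - Y.1 * X.1, by
    rw [mem_so, Matrix.transpose_sub, Matrix.transpose_mul, Matrix.transpose_mul,
      so_skew X, so_skew Y]
    simp [neg_sub]⟩

/-- The inner product `⟨A, B⟩ = -(1/2) tr (A B)` on `so n ≅ ⋀²ℝⁿ`, for which
`{e_i ∧ e_j : i < j}` is orthonormal. -/
def ip {n : ℕ} (X Y : so n) : ℝ := -(1 / 2) * (X.1 * Y.1).trace

/-- `ip X` as a linear functional. -/
def ipL {n : ℕ} (X : so n) : so n →ₗ[ℝ] ℝ where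
  toFun Y := ip X Y
  map_add' Y Z := by
    simp [ip, Matrix.mul_add, Matrix.trace_add]
    ring
  map_smul' c Y := by
    simp [ip, Matrix.mul_smul, Matrix.trace_smul]
    ring

/-- The wedge `x ∧ y` of two vectors, as an element of `so n`. -/
def wedgeVec {n : ℕ} (x y : Fin n → ℝ) : so n :=
  ⟨Matrix.of fun i j => x i * y j - y i * x j, by
    rw [mem_so]
    ext i j
    simp [Matrix.transpose_apply]
    ring⟩

/-- Index set for the standard orthonormal basis `{e_i ∧ e_j : i < j}` of `so n`. -/
def pairs (n : ℕ) : Finset (Fin n × Fin n) := Finset.univ.filter (fun p => p.1 < p.2)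

/-- Standard basis vector of `ℝⁿ`. -/
def stdVec {n : ℕ} (i : Fin n) : Fin n → ℝ := Pi.single i 1

/-- The standard orthonormal basis element `e_i ∧ e_j` of `so n`. -/
def omegaB {n : ℕ} (p : Fin n × Fin n) : so n := wedgeVec (stdVec p.1) (stdVec p.2)

/-- Hamilton's sharp product `A # B` of self-adjoint endomorphisms of `⋀²ℝⁿ ≅ so n`:
`⟨(A # B)(φ), ψ⟩ = (1/2) Σ_{α,β} ⟨[A ω_α, B ω_β], φ⟩ ⟨[ω_α, ω_β], ψ⟩`
over the orthonormal basis `{ω_α} = {e_i ∧ e_j : i < j}`. -/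
def sharp {n : ℕ} (A B : Module.End ℝ (so n)) : Module.End ℝ (so n) :=
  (1 / 2 : ℝ) • ∑ p ∈ pairs n, ∑ q ∈ pairs n,
    (ipL (brkt (A (omegaB p)) (B (omegaB q)))).smulRight (brkt (omegaB p) (omegaB q))

/-- The bilinear map `Q(A,B) = (1/2)(AB + BA) + A # B`. -/
def Qbil {n : ℕ} (A B : Module.End ℝ (so n)) : Module.End ℝ (so n) :=
  (1 / 2 : ℝ) • (A * B + B * A) + sharp A B

/-- `Q(R) = R² + R # R`. -/
def Qop {n : ℕ} (R : Module.End ℝ (so n)) : Module.End ℝ (so n) := R * R + sharp R R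

/-- Self-adjointness of an endomorphism of `so n ≅ ⋀²ℝⁿ`. -/
def IsSelfAdjointCO {n : ℕ} (R : Module.End ℝ (so n)) : Prop :=
  ∀ X Y : so n, ip (R X) Y = ip X (R Y)

/-- The first Bianchi identity. -/
def SatBianchi {n : ℕ} (R : Module.End ℝ (so n)) : Prop :=
  ∀ x y z w : Fin n → ℝ,
    ip (R (wedgeVec x y)) (wedgeVec z w) + ip (R (wedgeVec y z)) (wedgeVec x w)
      + ip (R (wedgeVec z x)) (wedgeVec y w) = 0

/-- Algebraic curvature operators: self-adjoint endomorphisms of `⋀²ℝⁿ` satisfying the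
first Bianchi identity.  `IsACO R` says `R ∈ S²_B(⋀²ℝⁿ)`. -/
def IsACO {n : ℕ} (R : Module.End ℝ (so n)) : Prop := IsSelfAdjointCO R ∧ SatBianchi R

/-- The Ricci tensor of `R`, `Ric(R)_{ij} = Σ_k ⟨R(e_i ∧ e_k), e_j ∧ e_k⟩`. -/
def RicM {n : ℕ} (R : Module.End ℝ (so n)) : Matrix (Fin n) (Fin n) ℝ :=
  Matrix.of fun i j => ∑ k, ip (R (wedgeVec (stdVec i) (stdVec k))) (wedgeVec (stdVec j) (stdVec k))

/-- The scalar curvature `s(R) = tr Ric(R)`. -/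
def scal {n : ℕ} (R : Module.End ℝ (so n)) : ℝ := (RicM R).trace

/-- `‖Ric(R)‖² = tr (Ric(R)²)`. -/
def ricNormSq {n : ℕ} (R : Module.End ℝ (so n)) : ℝ := (RicM R * RicM R).trace

/-- The traceless Ricci tensor `Ric₀(R)`. -/
def Ric0M {n : ℕ} (R : Module.End ℝ (so n)) : Matrix (Fin n) (Fin n) ℝ :=
  RicM R - (scal R / n) • (1 : Matrix (Fin n) (Fin n) ℝ)

/-- `R` is Einstein if `Ric(R)` is a scalar multiple of the identity of `ℝⁿ`. -/
def IsEinstein {n : ℕ} (R : Module.End ℝ (so n)) : Prop :=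
  ∃ c : ℝ, RicM R = c • (1 : Matrix (Fin n) (Fin n) ℝ)

lemma wedgeEnd_key {n : ℕ} (A B : Matrix (Fin n) (Fin n) ℝ) (M : so n) :
    (A * M.1 * Bᵀ + B * M.1 * Aᵀ)ᵀ = -(A * M.1 * Bᵀ + B * M.1 * Aᵀ) := by
  have hM := so_skew M
  rw [Matrix.transpose_add, Matrix.transpose_mul, Matrix.transpose_mul,
    Matrix.transpose_mul, Matrix.transpose_mul, Matrix.transpose_transpose,
    Matrix.transpose_transpose, hM]
  simp only [Matrix.mul_neg, Matrix.neg_mul, Matrix.mul_assoc, neg_add]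
  abel

/-- The wedge `A ∧ B` of two endomorphisms of `ℝⁿ`, as an endomorphism of `⋀²ℝⁿ ≅ so n`:
`(A ∧ B)(v ∧ w) = (1/2)(Av ∧ Bw + Bv ∧ Aw)`, i.e. `M ↦ (1/2)(A M Bᵀ + B M Aᵀ)`. -/
def wedgeEnd {n : ℕ} (A B : Matrix (Fin n) (Fin n) ℝ) : Module.End ℝ (so n) where
  toFun M := ⟨(1 / 2 : ℝ) • (A * M.1 * Bᵀ + B * M.1 * Aᵀ), by
    rw [mem_so, Matrix.transpose_smul, wedgeEnd_key, smul_neg]⟩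
  map_add' M N := by
    apply Subtype.ext
    simp [Matrix.mul_add, Matrix.add_mul, smul_add]
    abel
  map_smul' c M := by
    apply Subtype.ext
    simp [Matrix.mul_smul, Matrix.smul_mul, smul_smul, mul_comm]

/-- Inner product `⟨A, B⟩ = tr(A ∘ B)` on endomorphisms of `⋀²ℝⁿ` (the Frobenius inner
product for self-adjoint operators). -/
def endIP {n : ℕ} (A B : Module.End ℝ (so n)) : ℝ := LinearMap.trace ℝ ↥(so n) (A * B)

/-- Norm of an endomorphism of `⋀²ℝⁿ` induced by `endIP`. -/
def endNorm {n : ℕ} (A : Module.End ℝ (so n)) : ℝ := Real.sqrt (endIP A A)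

/-- Huisken's trilinear form `tri(A,B,C) = tr((AB + BA + 2 A#B) ∘ C) = 2⟨Q(A,B), C⟩`. -/
def tri {n : ℕ} (A B C : Module.End ℝ (so n)) : ℝ :=
  LinearMap.trace ℝ ↥(so n) ((A * B + B * A + (2 : ℝ) • sharp A B) * C)

/-- The identity component `R_I = (s(R)/(n(n-1))) id ∧ id` of a curvature operator. -/
def compI {n : ℕ} (R : Module.End ℝ (so n)) : Module.End ℝ (so n) :=
  (scal R / ((n : ℝ) * ((n : ℝ) - 1))) • 1

/-- The traceless-Ricci component `R_{Ric₀} = (2/(n-2)) Ric₀(R) ∧ id`. -/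
def compRic0 {n : ℕ} (R : Module.End ℝ (so n)) : Module.End ℝ (so n) :=
  (2 / ((n : ℝ) - 2)) • wedgeEnd (Ric0M R) 1

/-- The Weyl component `R_W = R - R_I - R_{Ric₀}`. -/
def compW {n : ℕ} (R : Module.End ℝ (so n)) : Module.End ℝ (so n) := R - compI R - compRic0 R

/-- The derivative `DQ̃(R)` of the normalized vector field
`Q̃(R) = Q(R) - ‖Ric R‖² R` at `R`, applied to `A`:
`DQ̃(R)(A) = 2Q(R,A) - ‖Ric R‖² A - 2 tr(Ric R · Ric A) R`. -/
def DQt {n : ℕ} (R A : Module.End ℝ (so n)) : Module.End ℝ (so n) :=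
  (2 : ℝ) • Qbil R A - ricNormSq R • A - (2 * (RicM R * RicM A).trace) • R


/-- The normalized-instability curve
`t ↦ (α₀/(1-λα₀t)) R⁰_I + (1/(1-λt)) R⁰_W`. -/
def curveA {n : ℕ} (R0I R0W : Module.End ℝ (so n)) (lam a t : ℝ) :
    Module.End ℝ (so n) :=
  (a / (1 - lam * a * t)) • R0I + (1 / (1 - lam * t)) • R0W

/-!
For `B` with the Bianchi identity, `Q(B, id ∧ id) = Ric(B) ∧ id`. As `tr ((A # B) C)` is totally
symmetric, this gives `tr Q(R) = (s / n) tr R` for an Einstein `R`, hence `λ = s / n`. It also gives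
`Q(R_I, R_W) = 0`, because `Ric(R_W) = 0`. So `Q(x R_I + y R_W) = λ x² R_I + λ y² R_W`, and the ODE
decouples into the scalar equations `x' = λ x²` and `y' = λ y²`. Starting from `x(0) = α₀ < 1` and
`y(0) = 1`, only `y` blows up at time `1 / λ`, so the Weyl part dominates in the limit.
-/

section InnerProduct

variable {n : ℕ}

/-- The inner product `ip` on `so n` as a bilinear form, so that it commutes with finite sums. -/
def ipForm : LinearMap.BilinForm ℝ (so n) :=
  LinearMap.mk₂ ℝ ip
    (fun X Y Z => by
      simp only [ip, Submodule.coe_add, Matrix.add_mul, Matrix.trace_add, mul_add])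
    (fun c X Y => by
      simp only [ip, Submodule.coe_smul, smul_mul_assoc, Matrix.trace_smul, smul_eq_mul,
        mul_left_comm])
    (fun X Y Z => (ipL X).map_add Y Z)
    (fun c X Y => (ipL X).map_smul c Y)

lemma ipForm_apply (X Y : so n) : ipForm X Y = ip X Y := rfl

lemma ipL_apply (X Y : so n) : ipL X Y = ip X Y := rfl

/-- The Lie bracket of `so n` as a bilinear map, so that it commutes with finite sums. -/
def brktₗ : so n →ₗ[ℝ] so n →ₗ[ℝ] so n :=
  LinearMap.mk₂ ℝ brkt
    (fun X Y Z => Subtype.ext <| by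
      simp only [brkt, Submodule.coe_add, Matrix.add_mul, Matrix.mul_add]; abel)
    (fun c X Y => Subtype.ext <| by simp [brkt, smul_sub])
    (fun X Y Z => Subtype.ext <| by
      simp only [brkt, Submodule.coe_add, Matrix.add_mul, Matrix.mul_add]; abel)
    (fun c X Y => Subtype.ext <| by simp [brkt, smul_sub])

lemma brktₗ_apply (X Y : so n) : brktₗ X Y = brkt X Y := rfl

lemma ip_comm (X Y : so n) : ip X Y = ip Y X := by
  rw [ip, ip, Matrix.trace_mul_comm]

lemma neg_brkt (X Y : so n) : -brkt X Y = brkt Y X :=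
  Subtype.ext <| neg_sub _ _

lemma ip_brkt_cycle (X Y Z : so n) : ip (brkt X Y) Z = ip Y (brkt Z X) := by
  simp only [ip, brkt, Matrix.sub_mul, Matrix.mul_sub, Matrix.trace_sub, ← Matrix.mul_assoc]
  rw [← Matrix.trace_mul_cycle]

lemma ip_wedgeVec (x y z w : Fin n → ℝ) :
    ip (wedgeVec x y) (wedgeVec z w) = (x ⬝ᵥ z) * (y ⬝ᵥ w) - (x ⬝ᵥ w) * (y ⬝ᵥ z) := by
  have wedgeVec_eq (u v : Fin n → ℝ) : (wedgeVec u v).1 = vecMulVec u v - vecMulVec v u := rfl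
  simp only [ip, wedgeVec_eq, Matrix.sub_mul, Matrix.mul_sub, vecMulVec_mul_vecMulVec,
    Matrix.trace_sub, trace_vecMulVec, dotProduct_smul, smul_eq_mul]
  ring

end InnerProduct

section StandardBasis

variable {n : ℕ}

lemma coe_omegaB (i j : Fin n) :
    (omegaB (i, j)).1 = Matrix.single i j 1 - Matrix.single j i 1 := by
  ext a b
  simp [omegaB, wedgeVec, stdVec, Matrix.single_apply, Pi.single_apply, eq_comm, ← ite_and,
    and_comm]

lemma neg_omegaB (i j : Fin n) : -omegaB (i, j) = omegaB (j, i) :=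
  Subtype.ext <| by simp [coe_omegaB]

lemma omegaB_self (i : Fin n) : omegaB (i, i) = 0 :=
  Subtype.ext <| by simp [coe_omegaB]

lemma ip_omegaB (X : so n) (i j : Fin n) : ip X (omegaB (i, j)) = X.1 i j := by
  simp only [ip, coe_omegaB, Matrix.mul_sub, Matrix.trace_sub, Matrix.trace_mul_single,
    so_skew' X i j, MulOpposite.op_one, one_smul]
  ring

lemma sum_sum_omegaB_of_even {M : Type*} [AddCommMonoid M] (f : so n → M)
    (hf : ∀ X, f (-X) = f X) (hf₀ : f 0 = 0) :
    ∑ i, ∑ j, f (omegaB (i, j)) = 2 • ∑ p ∈ pairs n, f (omegaB p) := by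
  have split_order (p : Fin n × Fin n) : f (omegaB p) =
      (if p.1 < p.2 then f (omegaB p) else 0) + if p.2 < p.1 then f (omegaB p) else 0 := by
    obtain ⟨i, j⟩ := p
    rcases lt_trichotomy i j with h | rfl | h
    · simp [h, h.not_gt]
    · simp [omegaB_self, hf₀]
    · simp [h, h.not_gt]
  have swap : ∑ p : Fin n × Fin n, (if p.2 < p.1 then f (omegaB p) else 0) =
      ∑ p : Fin n × Fin n, if p.1 < p.2 then f (omegaB p) else 0 :=
    Fintype.sum_equiv (Equiv.prodComm _ _) _ _ fun ⟨i, j⟩ => by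
      simp [← neg_omegaB i j, hf]
  rw [← Fintype.sum_prod_type' fun i j => f (omegaB (i, j)), Fintype.sum_congr _ _ split_order,
    Finset.sum_add_distrib, swap, two_smul, pairs, Finset.sum_filter]

lemma sum_sum_smul_omegaB (X : so n) : ∑ i, ∑ j, X.1 i j • omegaB (i, j) = (2 : ℝ) • X := by
  apply Subtype.ext
  have hsingle (i j : Fin n) :
      X.1 i j • (omegaB (i, j)).1 = Matrix.single i j (X.1 i j) + Matrix.single j i (X.1 j i) := by
    rw [coe_omegaB, so_skew' X i j]
    simp [Matrix.smul_single, Matrix.single_neg, sub_eq_add_neg]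
  simp only [Submodule.coe_sum, Submodule.coe_smul, hsingle, Finset.sum_add_distrib]
  rw [Finset.sum_comm (f := fun i j => Matrix.single j i (X.1 j i)), ← matrix_eq_sum_single,
    two_smul]

lemma sum_ip_smul_omegaB (X : so n) : ∑ p ∈ pairs n, ip (omegaB p) X • omegaB p = X := by
  have h := sum_sum_omegaB_of_even (fun Y => ip Y X • Y)
    (fun Y => by simp [← ipForm_apply]) (smul_zero _)
  simp only [ip_comm _ X, ip_omegaB, sum_sum_smul_omegaB] at h
  rw [← Nat.cast_smul_eq_nsmul ℝ] at h
  simpa only [ip_comm _ X] using (smul_right_injective _ two_ne_zero h).symm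

lemma trace_eq_sum_ip_omegaB (F : Module.End ℝ (so n)) :
    LinearMap.trace ℝ (so n) F = ∑ p ∈ pairs n, ip (omegaB p) (F (omegaB p)) := by
  have hF : F = ∑ p ∈ pairs n, (ipL (omegaB p)).smulRight (F (omegaB p)) := by
    ext1 X
    conv_lhs => rw [← sum_ip_smul_omegaB X]
    simp [ipL_apply]
  conv_lhs => rw [hF, map_sum]
  simp only [LinearMap.trace_smulRight, ipL_apply]

end StandardBasis

section Sharp

variable {n : ℕ}

lemma sharp_apply (A B : Module.End ℝ (so n)) (X : so n) :
    sharp A B X = (1 / 2 : ℝ) • ∑ p ∈ pairs n, ∑ q ∈ pairs n,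
      ip (brkt (A (omegaB p)) (B (omegaB q))) X • brkt (omegaB p) (omegaB q) := by
  simp [sharp, ipL_apply]

lemma sharp_comm (A B : Module.End ℝ (so n)) : sharp A B = sharp B A := by
  ext1 X
  rw [sharp_apply, sharp_apply, Finset.sum_comm]
  congr 1
  refine Finset.sum_congr rfl fun q _ => Finset.sum_congr rfl fun p _ => ?_
  rw [← neg_brkt (B _), ← neg_brkt (omegaB q), ← ipForm_apply, map_neg, LinearMap.neg_apply,
    neg_smul_neg, ipForm_apply]

lemma sharp_add_left (A B C : Module.End ℝ (so n)) :
    sharp (A + B) C = sharp A C + sharp B C := by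
  ext1 X
  simp only [LinearMap.add_apply, sharp_apply, ← ipForm_apply, ← brktₗ_apply, map_add, add_smul,
    Finset.sum_add_distrib, smul_add]

lemma sharp_smul_left (c : ℝ) (A C : Module.End ℝ (so n)) :
    sharp (c • A) C = c • sharp A C := by
  ext1 X
  simp only [LinearMap.smul_apply, sharp_apply, ← ipForm_apply, ← brktₗ_apply, map_smul,
    smul_eq_mul, mul_smul, ← Finset.smul_sum]
  rw [smul_comm]

lemma sharp_add_right (A B C : Module.End ℝ (so n)) :
    sharp A (B + C) = sharp A B + sharp A C := by
  simp only [sharp_comm A, sharp_add_left]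

lemma sharp_one_apply (R : Module.End ℝ (so n)) (X : so n) :
    sharp R 1 X = (1 / 2 : ℝ) • ∑ p ∈ pairs n, brkt (omegaB p) (brkt X (R (omegaB p))) := by
  rw [sharp_apply]
  congr! 3 with p
  conv_rhs => rw [← sum_ip_smul_omegaB (brkt X (R (omegaB p))), ← brktₗ_apply]
  simp only [ip_brkt_cycle, Module.End.one_apply, map_sum, map_smul, brktₗ_apply]

lemma trace_sharp_mul (A B C : Module.End ℝ (so n)) :
    LinearMap.trace ℝ (so n) (sharp A B * C) =
      (1 / 2) * ∑ p ∈ pairs n, ∑ q ∈ pairs n, ∑ r ∈ pairs n,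
        ip (brkt (A (omegaB p)) (B (omegaB q))) (C (omegaB r)) *
          ip (brkt (omegaB p) (omegaB q)) (omegaB r) := by
  simp only [trace_eq_sum_ip_omegaB, Module.End.mul_apply, sharp_apply, ← ipForm_apply, map_smul,
    map_sum, smul_eq_mul, ← Finset.mul_sum]
  rw [Finset.sum_comm]
  congr! 2 with p
  rw [Finset.sum_comm]
  simp only [ipForm_apply, ip_comm (omegaB _)]

lemma trace_sharp_mul_right_comm (A B C : Module.End ℝ (so n)) :
    LinearMap.trace ℝ (so n) (sharp A B * C) = LinearMap.trace ℝ (so n) (sharp A C * B) := by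
  have brkt_swap_last (X Y Z : so n) : ip (brkt X Y) Z = -ip (brkt X Z) Y := by
    rw [ip_brkt_cycle, ip_comm, ← neg_brkt, ← ipForm_apply, map_neg]; rfl
  rw [trace_sharp_mul, trace_sharp_mul]
  congr! 2 with p
  rw [Finset.sum_comm]
  congr! 2 with r _ q
  rw [brkt_swap_last, brkt_swap_last (omegaB p), neg_mul_neg]

end Sharp

section BianchiIdentity

variable {n : ℕ}

lemma satBianchi_one : SatBianchi (1 : Module.End ℝ (so n)) := by
  intro x y z w
  simp only [Module.End.one_apply, ip_wedgeVec, dotProduct_comm y x, dotProduct_comm z]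
  ring

lemma SatBianchi.sub_smul {R S : Module.End ℝ (so n)} (hR : SatBianchi R) (hS : SatBianchi S)
    (c : ℝ) : SatBianchi (R - c • S) := by
  intro x y z w
  simp only [SatBianchi, ← ipForm_apply] at hR hS
  simp only [← ipForm_apply, LinearMap.sub_apply, LinearMap.smul_apply, map_sub, map_smul,
    smul_eq_mul]
  linear_combination hR x y z w - c * hS x y z w

lemma RicM_apply (R : Module.End ℝ (so n)) (i j : Fin n) :
    RicM R i j = ∑ k, (R (omegaB (i, k))).1 j k := by
  simp only [← ip_omegaB]
  rfl

lemma sum_sum_mul_apply_omegaB (R : Module.End ℝ (so n)) (X : so n) (a b : Fin n) :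
    ∑ j, ∑ k, X.1 j k * (R (omegaB (j, k))).1 a b = 2 * (R X).1 a b := by
  have h := congrArg (fun Y => (R Y).1 a b) (sum_sum_smul_omegaB X)
  simpa [Matrix.sum_apply] using h

lemma SatBianchi.sum_sum_mul_apply_omegaB_left {R : Module.End ℝ (so n)} (hR : SatBianchi R)
    (X : so n) (a b : Fin n) :
    ∑ j, ∑ k, X.1 j k * (R (omegaB (a, j))).1 k b = -(R X).1 a b := by
  have bianchi (j k : Fin n) : (R (omegaB (a, j))).1 k b + (R (omegaB (j, k))).1 a b =
      (R (omegaB (a, k))).1 j b := by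
    have h := hR (stdVec a) (stdVec j) (stdVec k) (stdVec b)
    change ip (R (omegaB (a, j))) (omegaB (k, b)) + ip (R (omegaB (j, k))) (omegaB (a, b)) +
      ip (R (omegaB (k, a))) (omegaB (j, b)) = 0 at h
    rw [← neg_omegaB a k, map_neg, ip_omegaB, ip_omegaB, ip_omegaB] at h
    simpa [← sub_eq_add_neg, sub_eq_zero] using h
  have relabel : ∑ j, ∑ k, X.1 j k * (R (omegaB (a, k))).1 j b =
      -∑ j, ∑ k, X.1 j k * (R (omegaB (a, j))).1 k b := by
    rw [Finset.sum_comm]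
    simp only [← Finset.sum_neg_distrib, ← neg_mul, ← so_skew' X]
  have contracted : (∑ j, ∑ k, X.1 j k * (R (omegaB (a, j))).1 k b) + 2 * (R X).1 a b =
      -∑ j, ∑ k, X.1 j k * (R (omegaB (a, j))).1 k b := by
    rw [← sum_sum_mul_apply_omegaB, ← relabel]
    simp only [← Finset.sum_add_distrib, ← mul_add, bianchi]
  linarith

lemma sum_sum_omegaB_mul_mul_apply (R : Module.End ℝ (so n)) (M : Matrix (Fin n) (Fin n) ℝ)
    (a b : Fin n) :
    (∑ i, ∑ j, (omegaB (i, j)).1 * M * (R (omegaB (i, j))).1) a b =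
      2 * ∑ j, ∑ k, M j k * (R (omegaB (a, j))).1 k b := by
  have hsingle (i j : Fin n) : (omegaB (i, j)).1 * M * (R (omegaB (i, j))).1 =
      Matrix.single i j 1 * (M * (R (omegaB (i, j))).1) +
        Matrix.single j i 1 * (M * (R (omegaB (j, i))).1) := by
    rw [← neg_omegaB i j, map_neg, coe_omegaB]
    simp [Matrix.add_mul, Matrix.mul_assoc, sub_eq_add_neg]
  simp only [hsingle, Finset.sum_add_distrib]
  rw [Finset.sum_comm (f := fun i j =>
    Matrix.single j i 1 * (M * (R (omegaB (j, i))).1)), ← two_smul ℝ]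
  simp only [Matrix.smul_apply, Matrix.sum_apply, smul_eq_mul]
  congr 1
  rw [Finset.sum_comm]
  refine Finset.sum_congr rfl fun j _ => ?_
  rw [Finset.sum_eq_single_of_mem a (Finset.mem_univ a) fun i _ hi =>
    Matrix.single_mul_apply_of_ne _ _ _ _ _ hi.symm _, Matrix.single_mul_apply_same, one_mul,
    Matrix.mul_apply]

lemma sum_sum_omegaB_mul (R : Module.End ℝ (so n)) :
    ∑ i, ∑ j, (omegaB (i, j)).1 * (R (omegaB (i, j))).1 = -(2 : ℝ) • RicM R := by
  ext a b
  have h := sum_sum_omegaB_mul_mul_apply R 1 a b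
  simp only [mul_one, Matrix.one_apply, ite_mul, one_mul, zero_mul, Finset.sum_ite_eq,
    Finset.mem_univ, if_true] at h
  rw [h, Matrix.smul_apply, RicM_apply, smul_eq_mul, neg_mul, ← mul_neg, ← Finset.sum_neg_distrib]
  simp only [← so_skew']

lemma SatBianchi.sum_sum_omegaB_mul_mul {R : Module.End ℝ (so n)} (hR : SatBianchi R) (X : so n) :
    ∑ i, ∑ j, (omegaB (i, j)).1 * X.1 * (R (omegaB (i, j))).1 = -(2 : ℝ) • (R X).1 := by
  ext a b
  rw [sum_sum_omegaB_mul_mul_apply, hR.sum_sum_mul_apply_omegaB_left]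
  simp

lemma four_smul_coe_sharp_one_apply (R : Module.End ℝ (so n)) (X : so n) :
    (4 : ℝ) • (sharp R 1 X).1 =
      ∑ i, ∑ j, (brkt (omegaB (i, j)) (brkt X (R (omegaB (i, j))))).1 := by
  have h := sum_sum_omegaB_of_even (fun Y => brkt Y (brkt X (R Y)))
    (fun Y => by simp [← brktₗ_apply]) (by simp [← brktₗ_apply])
  simp only [← Submodule.coe_sum, ← Submodule.coe_smul, h, sharp_one_apply]
  congr 1
  module

lemma SatBianchi.coe_sharp_one_apply {R : Module.End ℝ (so n)} (hR : SatBianchi R) (X : so n) :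
    (sharp R 1 X).1 = (1 / 2 : ℝ) • (RicM R * X.1 + X.1 * (RicM R)ᵀ) - (R X).1 := by
  have hRic := sum_sum_omegaB_mul R
  have hRic' : ∑ i, ∑ j, (R (omegaB (i, j))).1 * (omegaB (i, j)).1 = -(2 : ℝ) • (RicM R)ᵀ := by
    simpa [Matrix.transpose_sum, so_skew] using congrArg transpose hRic
  have hR₁ := hR.sum_sum_omegaB_mul_mul X
  have hR₂ : ∑ i, ∑ j, (R (omegaB (i, j))).1 * X.1 * (omegaB (i, j)).1 = -(2 : ℝ) • (R X).1 := by
    simpa [Matrix.transpose_sum, so_skew, Matrix.mul_assoc, neg_eq_iff_eq_neg] using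
      congrArg transpose hR₁
  have expand (i j : Fin n) : (brkt (omegaB (i, j)) (brkt X (R (omegaB (i, j))))).1 =
      (omegaB (i, j)).1 * X.1 * (R (omegaB (i, j))).1
        + (R (omegaB (i, j))).1 * X.1 * (omegaB (i, j)).1
        - (omegaB (i, j)).1 * (R (omegaB (i, j))).1 * X.1
        - X.1 * ((R (omegaB (i, j))).1 * (omegaB (i, j)).1) := by
    simp only [brkt]
    noncomm_ring
  have h := four_smul_coe_sharp_one_apply R X
  simp only [expand, Finset.sum_add_distrib, Finset.sum_sub_distrib, ← Finset.sum_mul,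
    ← Finset.mul_sum, hRic, hRic', hR₁, hR₂, smul_mul_assoc, mul_smul_comm] at h
  linear_combination (norm := module) (1 / 4 : ℝ) • h

theorem SatBianchi.Qbil_one {R : Module.End ℝ (so n)} (hR : SatBianchi R) :
    Qbil R 1 = wedgeEnd (RicM R) 1 := by
  ext1 X
  apply Subtype.ext
  have h : (R X).1 + (sharp R 1 X).1 = (1 / 2 : ℝ) • (RicM R * X.1 + X.1 * (RicM R)ᵀ) := by
    rw [hR.coe_sharp_one_apply, add_sub_cancel]
  simpa [Qbil, wedgeEnd, ← two_smul ℝ] using h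

end BianchiIdentity

section Reaction

variable {n : ℕ}

lemma Qbil_comm (A B : Module.End ℝ (so n)) : Qbil A B = Qbil B A := by
  rw [Qbil, Qbil, add_comm (A * B), sharp_comm]

lemma Qbil_smul_left (c : ℝ) (A B : Module.End ℝ (so n)) : Qbil (c • A) B = c • Qbil A B := by
  simp only [Qbil, sharp_smul_left, smul_mul_assoc, mul_smul_comm]
  module

lemma Qbil_smul_right (c : ℝ) (A B : Module.End ℝ (so n)) : Qbil A (c • B) = c • Qbil A B := by
  rw [Qbil_comm, Qbil_smul_left, Qbil_comm]

lemma Qbil_self (A : Module.End ℝ (so n)) : Qbil A A = Qop A := by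
  rw [Qbil, Qop]
  module

lemma Qop_smul (c : ℝ) (A : Module.End ℝ (so n)) : Qop (c • A) = c ^ 2 • Qop A := by
  rw [← Qbil_self, Qbil_smul_left, Qbil_smul_right, Qbil_self, smul_smul, sq]

lemma Qop_add (A B : Module.End ℝ (so n)) :
    Qop (A + B) = Qop A + (2 : ℝ) • Qbil A B + Qop B := by
  simp only [Qop, Qbil, sharp_add_left, sharp_add_right, sharp_comm B A, add_mul, mul_add]
  module

lemma Qop_smul_add_smul_of_Qbil_eq_zero {A B : Module.End ℝ (so n)} (h : Qbil A B = 0) (x y : ℝ) :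
    Qop (x • A + y • B) = x ^ 2 • Qop A + y ^ 2 • Qop B := by
  rw [Qop_add, Qbil_smul_left, Qbil_smul_right, h, Qop_smul, Qop_smul]
  module

lemma trace_Qop (R : Module.End ℝ (so n)) :
    LinearMap.trace ℝ (so n) (Qop R) = LinearMap.trace ℝ (so n) (Qbil R 1 * R) := by
  have hsharp := trace_sharp_mul_right_comm R R 1
  have hQbil : Qbil R 1 = R + sharp R 1 := by
    rw [Qbil, mul_one, one_mul]
    module
  rw [hQbil, Qop, add_mul, map_add, map_add, ← hsharp, mul_one]

lemma wedgeEnd_smul_one_one (c : ℝ) :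
    wedgeEnd (c • (1 : Matrix (Fin n) (Fin n) ℝ)) 1 = c • 1 := by
  ext1 X
  apply Subtype.ext
  simp only [wedgeEnd, transpose_one, transpose_smul, smul_mul_assoc, mul_smul_comm, one_mul,
    mul_one, LinearMap.coe_mk, AddHom.coe_mk, LinearMap.smul_apply, Module.End.one_apply,
    Submodule.coe_smul]
  module

end Reaction

section Ricci

variable {n : ℕ}

lemma RicM_add (R S : Module.End ℝ (so n)) : RicM (R + S) = RicM R + RicM S := by
  ext i j
  simp [RicM_apply, Finset.sum_add_distrib]

lemma RicM_smul (c : ℝ) (R : Module.End ℝ (so n)) : RicM (c • R) = c • RicM R := by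
  ext i j
  simp [RicM_apply, Finset.mul_sum]

lemma RicM_one : RicM (1 : Module.End ℝ (so n)) = ((n : ℝ) - 1) • 1 := by
  ext i j
  have omegaB_apply (k : Fin n) : (omegaB (i, k)).1 j k =
      (1 - if k = i then 1 else 0) * (1 : Matrix (Fin n) (Fin n) ℝ) i j := by
    rcases eq_or_ne k i with rfl | hki
    · simp [omegaB_self]
    · simp [coe_omegaB, Matrix.single_apply, Matrix.one_apply, hki, hki.symm]
  simp [RicM_apply, omegaB_apply, ← Finset.sum_mul]

lemma Qop_one : Qop (1 : Module.End ℝ (so n)) = ((n : ℝ) - 1) • 1 := by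
  rw [← Qbil_self, satBianchi_one.Qbil_one, RicM_one, wedgeEnd_smul_one_one]

lemma scal_eq_two_mul_trace (R : Module.End ℝ (so n)) :
    scal R = 2 * LinearMap.trace ℝ (so n) R := by
  have h := sum_sum_omegaB_of_even (fun X => ip X (R X)) (fun X => by simp [← ipForm_apply])
    (by simp [← ipForm_apply])
  rw [← trace_eq_sum_ip_omegaB, nsmul_eq_mul, Nat.cast_ofNat] at h
  simp only [← h, ip_comm _ (R _)]
  rfl

lemma two_le_of_scal_ne_zero {R : Module.End ℝ (so n)} (h : scal R ≠ 0) : 2 ≤ n := by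
  contrapose! h
  have : Subsingleton (Fin n) := Fin.subsingleton_iff_le_one.2 (Nat.lt_succ_iff.1 h)
  have pairs_eq_empty : pairs n = ∅ :=
    Finset.filter_eq_empty_iff.2 fun p _ => (Subsingleton.elim p.1 p.2).not_lt
  rw [scal_eq_two_mul_trace, trace_eq_sum_ip_omegaB, pairs_eq_empty, Finset.sum_empty, mul_zero]

lemma IsEinstein.RicM_eq {R : Module.End ℝ (so n)} (hR : IsEinstein R) :
    RicM R = (scal R / n) • 1 := by
  obtain ⟨c, hc⟩ := hR
  rcases eq_or_ne n 0 with rfl | hn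
  · exact Subsingleton.elim _ _
  · simp [scal, hc, hn]

lemma IsEinstein.compRic0_eq_zero {R : Module.End ℝ (so n)} (hR : IsEinstein R) :
    compRic0 R = 0 := by
  have hRic0 : Ric0M R = (0 : ℝ) • 1 := by rw [Ric0M, hR.RicM_eq, sub_self, zero_smul]
  rw [compRic0, hRic0, wedgeEnd_smul_one_one, zero_smul, smul_zero]

lemma IsEinstein.compW_eq {R : Module.End ℝ (so n)} (hR : IsEinstein R) :
    compW R = R - compI R := by
  rw [compW, hR.compRic0_eq_zero]
  exact sub_zero (R - compI R)

lemma IsEinstein.compI_add_compW {R : Module.End ℝ (so n)} (hR : IsEinstein R) :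
    compI R + compW R = R := by
  rw [hR.compW_eq]
  exact add_sub_cancel (compI R) R

lemma RicM_compI (hn : 2 ≤ n) (R : Module.End ℝ (so n)) : RicM (compI R) = (scal R / n) • 1 := by
  have hn₁ : (n : ℝ) - 1 ≠ 0 := sub_ne_zero.2 (by norm_cast; omega)
  rw [compI, RicM_smul, RicM_one, smul_smul]
  congr 1
  field_simp

lemma IsEinstein.RicM_compW (hn : 2 ≤ n) {R : Module.End ℝ (so n)} (hR : IsEinstein R) :
    RicM (compW R) = 0 := by
  have h := RicM_add (compI R) (compW R)
  rwa [hR.compI_add_compW, RicM_compI hn, hR.RicM_eq, left_eq_add] at h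

lemma compW_smul_one_add (hn : 2 ≤ n) {W : Module.End ℝ (so n)} (hW : RicM W = 0) (x : ℝ) :
    compW (x • 1 + W) = W := by
  have hRic : RicM (x • 1 + W) = (x * (n - 1)) • (1 : Matrix (Fin n) (Fin n) ℝ) := by
    rw [RicM_add, RicM_smul, RicM_one, hW, add_zero, smul_smul]
  have hscal : scal (x • 1 + W) = x * (n * (n - 1)) := by
    rw [scal, hRic, trace_smul, trace_one, Fintype.card_fin, smul_eq_mul]
    ring
  have hn₀ : (n : ℝ) * (n - 1) ≠ 0 :=
    mul_ne_zero (by norm_cast; omega) (sub_ne_zero.2 (by norm_cast; omega))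
  rw [IsEinstein.compW_eq ⟨_, hRic⟩, compI, hscal, mul_div_cancel_right₀ _ hn₀]
  exact add_sub_cancel_left (x • 1) W

lemma Qop_compI (hn : 2 ≤ n) (R : Module.End ℝ (so n)) :
    Qop (compI R) = (scal R / n) • compI R := by
  have hn₁ : (n : ℝ) - 1 ≠ 0 := sub_ne_zero.2 (by norm_cast; omega)
  rw [compI, Qop_smul, Qop_one, smul_smul, smul_smul]
  congr 1
  field_simp

lemma IsEinstein.Qbil_compI_compW (hn : 2 ≤ n) {R : Module.End ℝ (so n)} (hR : IsEinstein R)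
    (hB : SatBianchi R) : Qbil (compI R) (compW R) = 0 := by
  have hBW : SatBianchi (compW R) := by
    rw [hR.compW_eq, compI]
    exact hB.sub_smul satBianchi_one _
  rw [compI, Qbil_smul_left, Qbil_comm, hBW.Qbil_one, hR.RicM_compW hn, ← zero_smul ℝ,
    wedgeEnd_smul_one_one, zero_smul, smul_zero]

lemma IsEinstein.eq_scal_div_of_Qop_eq_smul {R : Module.End ℝ (so n)} (hR : IsEinstein R)
    (hB : SatBianchi R) (hs : scal R ≠ 0) {lam : ℝ} (hQ : Qop R = lam • R) :
    lam = scal R / n := by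
  have htrace : LinearMap.trace ℝ (so n) R ≠ 0 := by
    rw [scal_eq_two_mul_trace] at hs
    exact right_ne_zero_of_mul hs
  have h := trace_Qop R
  rw [hQ, hB.Qbil_one, hR.RicM_eq, wedgeEnd_smul_one_one, smul_mul_assoc, one_mul, map_smul,
    map_smul] at h
  exact smul_left_injective ℝ htrace h

lemma IsEinstein.Qop_compW (hn : 2 ≤ n) {R : Module.End ℝ (so n)} (hR : IsEinstein R)
    (hB : SatBianchi R) (hQ : Qop R = (scal R / n) • R) :
    Qop (compW R) = (scal R / n) • compW R := by
  have hadd := Qop_add (compI R) (compW R)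
  rw [hR.Qbil_compI_compW hn hB, Qop_compI hn, hR.compI_add_compW, hQ, smul_zero, add_zero] at hadd
  ext1 X
  have hQX := LinearMap.congr_fun hadd X
  have hRX := LinearMap.congr_fun hR.compI_add_compW X
  simp only [LinearMap.add_apply, LinearMap.smul_apply] at hQX hRX ⊢
  linear_combination (norm := module) -hQX - (scal R / n) • hRX

end Ricci

section Curve

variable {n : ℕ}

lemma endNorm_smul (c : ℝ) (A : Module.End ℝ (so n)) : endNorm (c • A) = |c| * endNorm A := by
  rw [endNorm, endNorm, endIP, smul_mul_smul_comm, map_smul, smul_eq_mul,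
    Real.sqrt_mul (mul_self_nonneg c), Real.sqrt_mul_self_eq_abs]
  rfl

lemma curveA_apply_apply (I W : Module.End ℝ (so n)) (lam a t : ℝ) (φ : so n) (i j : Fin n) :
    (curveA I W lam a t φ).1 i j =
      a / (1 - lam * a * t) * (I φ).1 i j + 1 / (1 - lam * t) * (W φ).1 i j :=
  rfl

lemma curveA_zero (I W : Module.End ℝ (so n)) (lam a : ℝ) : curveA I W lam a 0 = a • I + W := by
  simp [curveA]

lemma compW_curveA (hn : 2 ≤ n) {R : Module.End ℝ (so n)} (hR : IsEinstein R) (lam a t : ℝ) :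
    compW (curveA (compI R) (compW R) lam a t) = (1 / (1 - lam * t)) • compW R := by
  rw [curveA, compI, smul_smul]
  exact compW_smul_one_add hn (by rw [RicM_smul, hR.RicM_compW hn, smul_zero]) _

lemma setOf_mul_lt_one {lam : ℝ} (hlam : 0 < lam) : {t | lam * t < 1} = Set.Iio (1 / lam) :=
  Set.ext fun _ => (lt_div_iff₀' hlam).symm

lemma mul_mul_lt_one {lam a t : ℝ} (ha : a ∈ Set.Ioo (0 : ℝ) 1) (ht : lam * t < 1) :
    lam * a * t < 1 :=
  calc lam * a * t = a * (lam * t) := by ring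
    _ < a * 1 := mul_lt_mul_of_pos_left ht ha.1
    _ < 1 := by simpa using ha.2

lemma hasDerivAt_div_one_sub_mul {lam a t : ℝ} (h : lam * a * t ≠ 1) :
    HasDerivAt (fun s => a / (1 - lam * a * s)) ((a / (1 - lam * a * t)) ^ 2 * lam) t := by
  have hden : 1 - lam * a * t ≠ 0 := sub_ne_zero.2 h.symm
  have hlin : HasDerivAt (fun s => 1 - lam * a * s) (-(lam * a)) t := by
    simpa using ((hasDerivAt_id t).const_mul (lam * a)).const_sub 1
  refine ((hasDerivAt_const t a).div hlin hden).congr_deriv ?_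
  field_simp
  ring

theorem hasDerivAt_curveA {I W : Module.End ℝ (so n)} {lam : ℝ} (hI : Qop I = lam • I)
    (hW : Qop W = lam • W) (hIW : Qbil I W = 0) {a t : ℝ} (ht : lam * t ≠ 1)
    (hat : lam * a * t ≠ 1) (φ : so n) (i j : Fin n) :
    HasDerivAt (fun s => (curveA I W lam a s φ).1 i j)
      ((Qop (curveA I W lam a t) φ).1 i j) t := by
  have hQ : (Qop (curveA I W lam a t) φ).1 i j =
      (a / (1 - lam * a * t)) ^ 2 * lam * (I φ).1 i j +
        (1 / (1 - lam * t)) ^ 2 * lam * (W φ).1 i j := by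
    rw [curveA, Qop_smul_add_smul_of_Qbil_eq_zero hIW, hI, hW, smul_smul, smul_smul]
    rfl
  have hx := hasDerivAt_div_one_sub_mul hat
  have hy := hasDerivAt_div_one_sub_mul (lam := lam) (a := 1) (t := t) (by rwa [mul_one])
  simp only [mul_one] at hy
  rw [hQ]
  exact (hx.mul_const _).add (hy.mul_const _)

theorem tendsto_inv_endNorm_mul_curveA (I W : Module.End ℝ (so n)) {lam a : ℝ} (hlam : lam ≠ 0)
    (ha : a ≠ 1) (φ : so n) (i j : Fin n) :
    Tendsto (fun t => (endNorm ((1 / (1 - lam * t)) • W))⁻¹ * (curveA I W lam a t φ).1 i j)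
      (nhdsWithin (1 / lam) {t | lam * t < 1}) (nhds ((endNorm W)⁻¹ * (W φ).1 i j)) := by
  have hden : 1 - lam * a * (1 / lam) ≠ 0 := by
    rw [mul_right_comm, mul_one_div_cancel hlam, one_mul]
    exact sub_ne_zero.2 ha.symm
  have hcont : ContinuousAt (fun t => (endNorm W)⁻¹ *
      ((1 - lam * t) * (a / (1 - lam * a * t)) * (I φ).1 i j + (W φ).1 i j)) (1 / lam) := by
    fun_prop (disch := exact hden)
  have hlim := hcont.tendsto.mono_left (nhdsWithin_le_nhds (s := {t | lam * t < 1}))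
  simp only [mul_one_div_cancel hlam, sub_self, zero_mul, zero_add] at hlim
  refine hlim.congr' ?_
  filter_upwards [self_mem_nhdsWithin] with t ht
  have hpos : 0 < 1 - lam * t := sub_pos.2 ht
  rw [curveA_apply_apply, endNorm_smul, abs_of_pos (one_div_pos.2 hpos), mul_inv]
  field_simp

end Curve

theorem stmt3_general {n : ℕ} {R0 : Module.End ℝ (so n)} (hACO : IsACO R0)
    (hEin : IsEinstein R0) (hs : scal R0 ≠ 0)
    (hnotI : ¬ ∃ c : ℝ, R0 = c • (1 : Module.End ℝ (so n)))
    {lam : ℝ} (hQ : Qop R0 = lam • R0) :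
    lam = scal R0 / n ∧ R0 = compI R0 + compW R0 ∧ compW R0 ≠ 0 ∧
    ∀ a : ℝ,
      (∀ t, lam * t ≠ 1 → lam * a * t ≠ 1 → ∀ (φ : so n) (i j : Fin n),
        HasDerivAt (fun s => (curveA (compI R0) (compW R0) lam a s φ).1 i j)
          ((Qop (curveA (compI R0) (compW R0) lam a t) φ).1 i j) t) ∧
      curveA (compI R0) (compW R0) lam a 0 = a • compI R0 + compW R0 ∧
      (a ≠ 1 → ∀ (φ : so n) (i j : Fin n),
        Tendsto
          (fun t => (endNorm (compW (curveA (compI R0) (compW R0) lam a t)))⁻¹ *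
            (curveA (compI R0) (compW R0) lam a t φ).1 i j)
          (nhdsWithin (1 / lam) {t | lam * t < 1})
          (nhds ((endNorm (compW R0))⁻¹ * (compW R0 φ).1 i j))) := by
  have hn : 2 ≤ n := two_le_of_scal_ne_zero hs
  have hsum : compI R0 + compW R0 = R0 := hEin.compI_add_compW
  obtain rfl : lam = scal R0 / n := hEin.eq_scal_div_of_Qop_eq_smul hACO.2 hs hQ
  have hlam : scal R0 / n ≠ 0 := div_ne_zero hs (by norm_cast; omega)
  refine ⟨rfl, hsum.symm, fun hW => hnotI ?_, fun a => ⟨fun t => ?_, curveA_zero _ _ _ a, ?_⟩⟩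
  · rw [hW, add_zero] at hsum
    exact ⟨_, hsum.symm⟩
  · exact hasDerivAt_curveA (Qop_compI hn R0) (hEin.Qop_compW hn hACO.2 hQ)
      (hEin.Qbil_compI_compW hn hACO.2)
  · simpa only [compW_curveA hn hEin] using tendsto_inv_endNorm_mul_curveA _ _ hlam

/-- Let `R⁰ ∈ S²_B(⋀²ℝⁿ)` be Einstein with `s(R⁰) > 0`, not a scalar
multiple of `id ∧ id` (so `R⁰ = R⁰_I + R⁰_W` with `R⁰_W ≠ 0`), with `Q(R⁰) = λR⁰`,
`λ > 0` (necessarily `λ = s(R⁰)/n`).  For every `α₀ ∈ (0,1)` the curve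
`R(t) = (α₀/(1-λα₀t)) R⁰_I + (1/(1-λt)) R⁰_W` on `[0, 1/λ)` solves `dR/dt = Q(R(t))`
(componentwise, i.e. in every matrix entry of every value), starts at
`α₀ R⁰_I + R⁰_W`, and the normalization `R(t)/‖R(t)_W‖` converges to `R⁰_W/‖R⁰_W‖` as
`t → 1/λ`: the ODE `dR/dt = Q(R)` is unstable near `R⁰`. -/
theorem stmt3 (n : ℕ) (R0 : Module.End ℝ (so n))
    (hACO : IsACO R0) (hEin : IsEinstein R0) (hs : 0 < scal R0)
    (hnotI : ¬ ∃ c : ℝ, R0 = c • (1 : Module.End ℝ (so n)))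
    (lam : ℝ) (hlam : 0 < lam) (hQ : Qop R0 = lam • R0) :
    lam = scal R0 / n ∧
    R0 = compI R0 + compW R0 ∧ compW R0 ≠ 0 ∧
    ∀ a ∈ Set.Ioo (0 : ℝ) 1,
      (∀ t ∈ Set.Ico (0 : ℝ) (1 / lam), ∀ (φ : so n) (i j : Fin n),
        HasDerivAt (fun s => ((curveA (compI R0) (compW R0) lam a s) φ).1 i j)
          (((Qop (curveA (compI R0) (compW R0) lam a t)) φ).1 i j) t) ∧
      curveA (compI R0) (compW R0) lam a 0 = a • compI R0 + compW R0 ∧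
      (∀ (φ : so n) (i j : Fin n),
        Filter.Tendsto
          (fun t => (endNorm (compW (curveA (compI R0) (compW R0) lam a t)))⁻¹ *
            ((curveA (compI R0) (compW R0) lam a t) φ).1 i j)
          (nhdsWithin (1 / lam) (Set.Iio (1 / lam)))
          (nhds ((endNorm (compW R0))⁻¹ * ((compW R0) φ).1 i j))) := by
  obtain ⟨hlam_eq, hsum, hW, hcurve⟩ := stmt3_general hACO hEin hs.ne' hnotI hQ
  rw [setOf_mul_lt_one hlam] at hcurve
  exact ⟨hlam_eq, hsum, hW, fun a ha =>
    ⟨fun t ht =>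
      have ht' : lam * t < 1 := (lt_div_iff₀' hlam).1 ht.2
      (hcurve a).1 t ht'.ne (mul_mul_lt_one ha ht').ne,
    (hcurve a).2.1, (hcurve a).2.2 ha.2.ne⟩⟩

end
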